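/- arXiv:gr-qc/0004041 — 3 statements merged into one kernel-verified Lean document; each statement's English description precedes it below -/
import Mathlib

section
/- Let r be a natural number and n : Fin r → ℕ with nᵢ ≥ 2 for all i. If Σᵢ (1 − 1/nᵢ) = 2 (as rational numbers), then either r = 3, or r = 4 and nᵢ = 2 for every i. -/
theorem stmt_1 (r : ℕ) (n : Fin r → ℕ) (hn : ∀ i, 2 ≤ n i)
    (hsum : ∑ i, (1 - 1 / (n i : ℚ)) = 2) :
    r = 3 ∨ (r = 4 ∧ ∀ i, n i = 2) := by
  have hcast (i : Fin r) : (2 : ℚ) ≤ n i := by exact_mod_cast hn i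
  have hlower (i : Fin r) : (1 / 2 : ℚ) ≤ 1 - 1 / (n i : ℚ) := by
    have := one_div_le_one_div_of_le two_pos (hcast i)
    linarith
  have hupper (i : Fin r) : 1 - 1 / (n i : ℚ) < 1 :=
    sub_lt_self 1 (one_div_pos.mpr (two_pos.trans_le (hcast i)))
  have hr_pos : 0 < r := by
    rcases Nat.eq_zero_or_pos r with rfl | h
    · simp at hsum
    · exact h
  have hr_gt : 2 < r := by
    have h := Finset.sum_lt_sum_of_nonempty (s := Finset.univ)
      ⟨⟨0, hr_pos⟩, Finset.mem_univ _⟩ fun i _ => hupper i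
    rw [hsum] at h
    simp only [Finset.sum_const, Finset.card_univ, Fintype.card_fin, nsmul_eq_mul, mul_one] at h
    exact_mod_cast h
  have hr_le : r ≤ 4 := by
    have h := Finset.sum_le_sum (s := Finset.univ) fun i _ => hlower i
    rw [hsum] at h
    simp only [Finset.sum_const, Finset.card_univ, Fintype.card_fin, nsmul_eq_mul] at h
    have : (r : ℚ) ≤ 4 := by linarith
    exact_mod_cast this
  obtain h3 | rfl : r = 3 ∨ r = 4 := by omega
  · exact Or.inl h3
  · refine Or.inr ⟨rfl, fun i => ?_⟩
    have heq := (Finset.sum_eq_sum_iff_of_le (s := Finset.univ) fun i _ => hlower i).mp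
      (by rw [hsum]; norm_num) i (Finset.mem_univ i)
    have hinv : 1 / (n i : ℚ) = 1 / 2 := by linarith
    have : (n i : ℚ) = 2 := by simpa using hinv
    exact_mod_cast this
end

section
/- Let u : ℝ × ℝ → ℝ be twice continuously differentiable and let c : ℝ × ℝ → ℝ be a function with c(x) > 0 for all x. Suppose Δu(x) = c(x)·(exp(2·u(x)) − 1) for all x (where Δu denotes the sum of the two pure second partial derivatives of u), and suppose u attains a global maximum at some point and a global minimum at some point. Then u is identically 0. -/
/-- The Laplacian of `u : ℝ × ℝ → ℝ` at a point, as the sum of the two pure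
second partial derivatives. -/
noncomputable def planeLaplacian (u : ℝ × ℝ → ℝ) (p : ℝ × ℝ) : ℝ :=
  deriv (deriv (fun s => u (s, p.2))) p.1 + deriv (deriv (fun t => u (p.1, t))) p.2

theorem IsLocalMax.deriv_deriv_nonpos {f : ℝ → ℝ} {a : ℝ} (h : IsLocalMax f a)
    (hc : ContinuousAt f a) : deriv (deriv f) a ≤ 0 := by
  by_contra! hpos
  have hconst : f =ᶠ[nhds a] fun _ => f a := by
    filter_upwards [h, isLocalMin_of_deriv_deriv_pos hpos h.deriv_eq_zero hc] with x hx hx'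
    exact le_antisymm hx hx'
  have hzero : deriv (deriv f) a = 0 := by simp [hconst.deriv.deriv_eq]
  exact hpos.ne' hzero

theorem IsLocalMin.deriv_deriv_nonneg {f : ℝ → ℝ} {a : ℝ} (h : IsLocalMin f a)
    (hc : ContinuousAt f a) : 0 ≤ deriv (deriv f) a := by
  simpa using h.neg.deriv_deriv_nonpos hc.neg

theorem planeLaplacian_nonpos_of_forall_le {u : ℝ × ℝ → ℝ} (hu : Continuous u) {p : ℝ × ℝ}
    (h : ∀ y, u y ≤ u p) : planeLaplacian u p ≤ 0 :=
  add_nonpos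
    (IsLocalMax.deriv_deriv_nonpos (f := fun s => u (s, p.2)) (.of_forall fun _ => h _)
      (by fun_prop))
    (IsLocalMax.deriv_deriv_nonpos (f := fun t => u (p.1, t)) (.of_forall fun _ => h _)
      (by fun_prop))

theorem planeLaplacian_nonneg_of_forall_ge {u : ℝ × ℝ → ℝ} (hu : Continuous u) {p : ℝ × ℝ}
    (h : ∀ y, u p ≤ u y) : 0 ≤ planeLaplacian u p :=
  add_nonneg
    (IsLocalMin.deriv_deriv_nonneg (f := fun s => u (s, p.2)) (.of_forall fun _ => h _)
      (by fun_prop))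
    (IsLocalMin.deriv_deriv_nonneg (f := fun t => u (p.1, t)) (.of_forall fun _ => h _)
      (by fun_prop))

theorem stmt_11 (u c : ℝ × ℝ → ℝ) (hu : ContDiff ℝ 2 u) (hc : ∀ x, 0 < c x)
    (heq : ∀ x, planeLaplacian u x = c x * (Real.exp (2 * u x) - 1))
    (hmax : ∃ xM, ∀ y, u y ≤ u xM) (hmin : ∃ xm, ∀ y, u xm ≤ u y) :
    ∀ x, u x = 0 := by
  obtain ⟨xM, hM⟩ := hmax
  obtain ⟨xm, hm⟩ := hmin
  have hM_nonpos : u xM ≤ 0 := by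
    have h := planeLaplacian_nonpos_of_forall_le hu.continuous hM
    rw [heq, ← smul_eq_mul, smul_nonpos_iff_nonpos_of_pos_left (hc xM), sub_nonpos,
      Real.exp_le_one_iff] at h
    linarith
  have hm_nonneg : 0 ≤ u xm := by
    have h := planeLaplacian_nonneg_of_forall_ge hu.continuous hm
    rw [heq, mul_nonneg_iff_of_pos_left (hc xm), sub_nonneg, Real.one_le_exp_iff] at h
    linarith
  exact fun x => le_antisymm ((hM x).trans hM_nonpos) (hm_nonneg.trans (hm x))
end

section
/- Let A, B, C and A', B', C' be points of the hyperbolic plane (upper half-plane model with its hyperbolic distance) such that dist(A, B) = dist(A', B'), dist(B, C) = dist(B', C'), and dist(C, A) = dist(C', A'). Then there exists an isometric equivalence φ of the upper half-plane onto itself with φ(A) = A', φ(B) = B', and φ(C) = C'. -/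
namespace UpperHalfPlane

theorem dist_eq_dist_iff_mul (z w z' w' : ℍ) :
    dist z w = dist z' w' ↔
      ((z.re - w.re) ^ 2 + (z.im - w.im) ^ 2) * (z'.im * w'.im) =
        ((z'.re - w'.re) ^ 2 + (z'.im - w'.im) ^ 2) * (z.im * w.im) := by
  have hsq (a b : ℍ) : dist (a : ℂ) b ^ 2 = (a.re - b.re) ^ 2 + (a.im - b.im) ^ 2 := by
    rw [Complex.dist_eq, Complex.sq_norm, Complex.normSq_apply]
    simp [sq]
  have hz := z.im_pos
  have hw := w.im_pos
  have hz' := z'.im_pos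
  have hw' := w'.im_pos
  rw [← Real.cosh_strictMonoOn.injOn.eq_iff (Set.mem_Ici.2 dist_nonneg)
      (Set.mem_Ici.2 dist_nonneg), cosh_dist, cosh_dist, hsq, hsq, add_right_inj,
    div_eq_div_iff (by positivity) (by positivity)]
  constructor <;> intro h <;> linarith

/-- The isometric equivalence given by a distance-preserving involution of the upper half-plane. -/
def isometryEquivOfInvolutive (f : ℍ → ℍ) (hf : Function.Involutive f)
    (hd : ∀ z w, dist (f z) (f w) = dist z w) : ℍ ≃ᵢ ℍ where
  toEquiv := hf.toPerm
  isometry_toFun := Isometry.of_dist_eq hd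

/-- Reflection in the vertical geodesic with real part `m`. -/
noncomputable def verticalReflection (m : ℝ) : ℍ ≃ᵢ ℍ :=
  isometryEquivOfInvolutive (fun z ↦ ⟨⟨2 * m - z.re, z.im⟩, z.im_pos⟩)
    (fun z ↦ UpperHalfPlane.ext (Complex.ext (by simp) (by simp))) fun z w ↦ by
      rw [dist_eq_dist_iff_mul]
      simp only [re, im]
      ring

theorem sub_sq_add_im_sq_pos (c : ℝ) (z : ℍ) : 0 < (z.re - c) ^ 2 + z.im ^ 2 := by
  have := z.im_pos
  positivity

/-- Inversion in the circle with real centre `c` and squared radius `k`. -/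
noncomputable def circleInversion (c k : ℝ) (hk : 0 < k) : ℍ ≃ᵢ ℍ :=
  isometryEquivOfInvolutive
    (fun z ↦ ⟨⟨c + k * (z.re - c) / ((z.re - c) ^ 2 + z.im ^ 2),
      k * z.im / ((z.re - c) ^ 2 + z.im ^ 2)⟩,
      div_pos (mul_pos hk z.im_pos) (sub_sq_add_im_sq_pos c z)⟩)
    (fun z ↦ by
      have hn := (sub_sq_add_im_sq_pos c z).ne'
      have hk' := hk.ne'
      have hn' : (k * (z.re - c) / ((z.re - c) ^ 2 + z.im ^ 2)) ^ 2 +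
          (k * z.im / ((z.re - c) ^ 2 + z.im ^ 2)) ^ 2 =
          k ^ 2 / ((z.re - c) ^ 2 + z.im ^ 2) := by
        field_simp
      refine UpperHalfPlane.ext (Complex.ext ?_ ?_)
      · change c + k * (c + k * (z.re - c) / ((z.re - c) ^ 2 + z.im ^ 2) - c) /
          ((c + k * (z.re - c) / ((z.re - c) ^ 2 + z.im ^ 2) - c) ^ 2 +
            (k * z.im / ((z.re - c) ^ 2 + z.im ^ 2)) ^ 2) = z.re
        rw [add_sub_cancel_left, hn']
        field_simp
        ring
      · change k * (k * z.im / ((z.re - c) ^ 2 + z.im ^ 2)) /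
          ((c + k * (z.re - c) / ((z.re - c) ^ 2 + z.im ^ 2) - c) ^ 2 +
            (k * z.im / ((z.re - c) ^ 2 + z.im ^ 2)) ^ 2) = z.im
        rw [add_sub_cancel_left, hn']
        field_simp)
    fun z w ↦ by
      have hz := (sub_sq_add_im_sq_pos c z).ne'
      have hw := (sub_sq_add_im_sq_pos c w).ne'
      rw [dist_eq_dist_iff_mul]
      change ((c + k * (z.re - c) / ((z.re - c) ^ 2 + z.im ^ 2) -
          (c + k * (w.re - c) / ((w.re - c) ^ 2 + w.im ^ 2))) ^ 2 +
        (k * z.im / ((z.re - c) ^ 2 + z.im ^ 2) -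
          k * w.im / ((w.re - c) ^ 2 + w.im ^ 2)) ^ 2) * (z.im * w.im) =
        ((z.re - w.re) ^ 2 + (z.im - w.im) ^ 2) *
          (k * z.im / ((z.re - c) ^ 2 + z.im ^ 2) * (k * w.im / ((w.re - c) ^ 2 + w.im ^ 2)))
      rw [add_sub_add_left_eq_sub]
      field_simp
      ring

theorem circleInversion_re (c k : ℝ) (hk : 0 < k) (z : ℍ) :
    (circleInversion c k hk z).re = c + k * (z.re - c) / ((z.re - c) ^ 2 + z.im ^ 2) := rfl

theorem circleInversion_im (c k : ℝ) (hk : 0 < k) (z : ℍ) :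
    (circleInversion c k hk z).im = k * z.im / ((z.re - c) ^ 2 + z.im ^ 2) := rfl

theorem circleInversion_eq_self (c k : ℝ) (hk : 0 < k) (z : ℍ)
    (hz : (z.re - c) ^ 2 + z.im ^ 2 = k) : circleInversion c k hk z = z := by
  refine UpperHalfPlane.ext (Complex.ext ?_ ?_)
  · change (circleInversion c k hk z).re = z.re
    rw [circleInversion_re, hz, mul_div_cancel_left₀ _ hk.ne', add_sub_cancel]
  · change (circleInversion c k hk z).im = z.im
    rw [circleInversion_im, hz, mul_div_cancel_left₀ _ hk.ne']

/-- Reflection in the perpendicular bisector: some isometry of the upper half-plane takes `P` to `Q`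
and fixes every point equidistant from `P` and `Q`. -/
theorem exists_isometryEquiv_fixing_equidistant (P Q : ℍ) :
    ∃ φ : ℍ ≃ᵢ ℍ, φ P = Q ∧ ∀ R, dist R P = dist R Q → φ R = R := by
  have hP := P.im_pos
  have hQ := Q.im_pos
  rcases eq_or_ne P.im Q.im with him | him
  · rcases eq_or_ne P.re Q.re with hre | hre
    · exact ⟨IsometryEquiv.refl ℍ, UpperHalfPlane.ext (Complex.ext hre him), fun _ _ ↦ rfl⟩
    refine ⟨verticalReflection ((P.re + Q.re) / 2), UpperHalfPlane.ext (Complex.ext ?_ him),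
      fun R hR ↦ UpperHalfPlane.ext (Complex.ext ?_ rfl)⟩
    · change 2 * ((P.re + Q.re) / 2) - P.re = Q.re
      ring
    · change 2 * ((P.re + Q.re) / 2) - R.re = R.re
      rw [dist_eq_dist_iff_mul, him] at hR
      have hR' := mul_right_cancel₀ (mul_pos R.im_pos hQ).ne' hR
      apply mul_left_cancel₀ (sub_ne_zero.2 hre)
      linarith
  · have hd : Q.im - P.im ≠ 0 := sub_ne_zero.2 him.symm
    obtain ⟨c, hc⟩ : ∃ c, c * (Q.im - P.im) = P.re * Q.im - Q.re * P.im :=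
      ⟨_, div_mul_cancel₀ _ hd⟩
    have hcol : (P.re - c) * Q.im = (Q.re - c) * P.im := by linarith
    have hnP := sub_sq_add_im_sq_pos c P
    have hk : 0 < ((P.re - c) ^ 2 + P.im ^ 2) * (Q.im / P.im) := by positivity
    have hQre : Q.re - c = (P.re - c) * (Q.im / P.im) := by
      field_simp
      linarith
    refine ⟨circleInversion c _ hk, UpperHalfPlane.ext (Complex.ext ?_ ?_),
      fun R hR ↦ circleInversion_eq_self _ _ _ _ ?_⟩
    · change (circleInversion c _ hk P).re = Q.re
      rw [circleInversion_re, mul_assoc, mul_div_cancel_left₀ _ hnP.ne', mul_comm, ← hQre,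
        add_sub_cancel]
    · change (circleInversion c _ hk P).im = Q.im
      rw [circleInversion_im, mul_assoc, mul_div_cancel_left₀ _ hnP.ne', div_mul_cancel₀ _ hP.ne']
    · rw [dist_eq_dist_iff_mul] at hR
      have hR' : ((R.re - P.re) ^ 2 + (R.im - P.im) ^ 2) * Q.im =
          ((R.re - Q.re) ^ 2 + (R.im - Q.im) ^ 2) * P.im :=
        mul_left_cancel₀ R.im_pos.ne' (by linarith)
      apply mul_left_cancel₀ hd
      obtain ⟨t, ht⟩ : ∃ t, Q.im / P.im = t := ⟨_, rfl⟩
      have hQim : Q.im = t * P.im := by rw [← ht, div_mul_cancel₀ _ hP.ne']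
      have hQre' : Q.re = c + (P.re - c) * t := by rw [← ht, ← hQre, add_sub_cancel]
      rw [ht]
      rw [hQim, hQre'] at hR'
      rw [hQim]
      linear_combination hR'

end UpperHalfPlane

theorem stmt_14 (A B C A' B' C' : UpperHalfPlane)
    (hAB : dist A B = dist A' B') (hBC : dist B C = dist B' C')
    (hCA : dist C A = dist C' A') :
    ∃ φ : UpperHalfPlane ≃ᵢ UpperHalfPlane, φ A = A' ∧ φ B = B' ∧ φ C = C' := by
  obtain ⟨f, hfA, -⟩ := UpperHalfPlane.exists_isometryEquiv_fixing_equidistant A A'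
  obtain ⟨g, hgB, hg⟩ := UpperHalfPlane.exists_isometryEquiv_fixing_equidistant (f B) B'
  have hgA : g A' = A' := hg A' (by rw [← hAB, ← hfA, f.dist_eq])
  obtain ⟨h, hhC, hh⟩ := UpperHalfPlane.exists_isometryEquiv_fixing_equidistant (g (f C)) C'
  have hhA : h A' = A' := hh A' (by
    rw [dist_comm A' C', ← hCA, dist_comm C A, ← f.dist_eq A C, ← g.dist_eq (f A), hfA, hgA])
  have hhB : h B' = B' := hh B' (by rw [← hBC, ← hgB, g.dist_eq, f.dist_eq])
  refine ⟨(f.trans g).trans h, ?_, ?_, ?_⟩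
  · simp [hfA, hgA, hhA]
  · simp [hgB, hhB]
  · simp [hhC]
end
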